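/- Let ĝ and g be finite-dimensional real Lie algebras, q : ĝ → g a surjective Lie algebra homomorphism with kernel n, and V a finite-dimensional real g-module, regarded as a ĝ-module via x·v := q(x)·v. Let p ≥ 1 and let f : n^p → V be a symmetric ĝ-invariant p-linear map. Then for any two linear sections σ₀, σ₁ : g → ĝ of q there exists an alternating (2p−1)-linear map η : g^{2p−1} → V such that f_{σ₀} − f_{σ₁} = d_g η; i.e., the cohomology class of the Chern–Weil cocycle f_σ in H^{2p}(g,V) is independent of the choice of linear section σ of q (Lecomte's generalized Chern–Weil map is well defined). -/

import Mathlib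

open scoped BigOperators

/-- The Chevalley–Eilenberg differential on `V`-valued cochains of a Lie algebra `g`
acting on a module `V`. -/
def ceDiff {g V : Type*} [LieRing g] [AddCommGroup V] [LieRingModule g V]
    (p : ℕ) (ω : (Fin p → g) → V) : (Fin (p + 1) → g) → V :=
  fun x =>
    (∑ j : Fin (p + 1), ((-1 : ℤ) ^ (j : ℕ)) • ⁅x j, ω (x ∘ j.succAbove)⁆)
      + ∑ j : Fin (p + 1), ∑ i : Fin (p + 1),
          if (i : ℕ) < (j : ℕ) then
            ((-1 : ℤ) ^ ((i : ℕ) + (j : ℕ))) •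
              ω (fun k : Fin p =>
                if (k : ℕ) = 0 then ⁅x i, x j⁆
                else
                  x ⟨if (k : ℕ) - 1 < (i : ℕ) then (k : ℕ) - 1
                     else if (k : ℕ) < (j : ℕ) then (k : ℕ) else (k : ℕ) + 1,
                     by have := k.isLt; split_ifs <;> omega⟩)
          else 0

/-- The curvature `R_σ(x,y) = ⁅σ x, σ y⁆ - σ ⁅x,y⁆` of a linear section `σ` of a surjective
Lie algebra morphism `π : gh → g`, as an element of the kernel `n = ker π`. -/
def curvKer {g gh : Type*} [LieRing g] [LieAlgebra ℝ g]
    [LieRing gh] [LieAlgebra ℝ gh]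
    (π : gh →ₗ⁅ℝ⁆ g) (σ : g →ₗ[ℝ] gh) (hσ : ∀ x, π (σ x) = x) (x y : g) :
    π.ker :=
  ⟨⁅σ x, σ y⁆ - σ ⁅x, y⁆, by
    rw [LieHom.mem_ker]
    simp [hσ]⟩

/-- The Chern–Weil cochain `f_σ (x₁,…,x_{2p}) = 2^{-p} Σ_{τ ∈ S_{2p}} sgn(τ)
f(R(x_{τ(1)},x_{τ(2)}),…,R(x_{τ(2p-1)},x_{τ(2p)}))`.  The arity `a` is passed along with a
proof `a = 2*p`. -/
noncomputable def chernWeil {g gh V : Type*} [LieRing g] [LieAlgebra ℝ g]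
    [LieRing gh] [LieAlgebra ℝ gh] [AddCommGroup V] [Module ℝ V]
    (π : gh →ₗ⁅ℝ⁆ g) (p a : ℕ) (ha : a = 2 * p)
    (σ : g →ₗ[ℝ] gh) (hσ : ∀ x, π (σ x) = x)
    (f : MultilinearMap ℝ (fun _ : Fin p => π.ker) V) :
    (Fin a → g) → V :=
  fun x => ((2 : ℝ) ^ p)⁻¹ •
    ∑ τ : Equiv.Perm (Fin a),
      ((Equiv.Perm.sign τ : ℤ)) •
        f (fun s : Fin p =>
          curvKer π σ hσ
            (x (τ ⟨2 * (s : ℕ), by have := s.isLt; omega⟩))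
            (x (τ ⟨2 * (s : ℕ) + 1, by have := s.isLt; omega⟩)))

/-!
Along the line of sections `σ + t D`, where `D` is the difference of two sections, the curvature
`R_t` is quadratic in `t` and its derivative is the covariant differential of `D` for `σ + t D`. By
symmetry of `f`, the derivative of the Chern–Weil cochain is therefore a multiple of the
antisymmetrization of `f(d_t D, R_t, …, R_t)`, and by the invariance of `f` and the Bianchi identity
this is a multiple of the coboundary of the antisymmetrization of `f(D, R_t, …, R_t)`. Every linear
functional that vanishes on coboundaries is thus constant along the line, so the two endpoints
differ by a coboundary; testing on functionals replaces an integral over `t`, which would need a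
topology on the space of cochains.
-/

open Equiv Finset Function

section Antisymmetrize

variable {ι X V : Type*} [Fintype ι] [DecidableEq ι] (R : Type*) [Semiring R] [AddCommGroup V]
  [Module R V]

/-- The signed sum of a function of several variables over all permutations of its arguments,
without normalizing factor. -/
def antisymmetrize : ((ι → X) → V) →ₗ[R] ((ι → X) → V) :=
  ∑ τ : Perm ι, (Perm.sign τ : ℤ) • LinearMap.funLeft R V fun x : ι → X => x ∘ τ

theorem antisymmetrize_apply (F : (ι → X) → V) (x : ι → X) :
    antisymmetrize R F x = ∑ τ : Perm ι, (Perm.sign τ : ℤ) • F (x ∘ τ) := by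
  simp [antisymmetrize, LinearMap.sum_apply, LinearMap.funLeft_apply]

theorem coe_alternatization_eq_antisymmetrize [AddCommMonoid X] [Module R X]
    (φ : MultilinearMap R (fun _ : ι => X) V) :
    ⇑(MultilinearMap.alternatization φ) = antisymmetrize R φ := by
  ext x
  rw [MultilinearMap.alternatization_apply, antisymmetrize_apply]
  rfl

theorem antisymmetrize_comp_perm (ρ : Perm ι) (F : (ι → X) → V) (x : ι → X) :
    antisymmetrize R (fun y => F (y ∘ ρ)) x = (Perm.sign ρ : ℤ) • antisymmetrize R F x := by
  simp only [antisymmetrize_apply, smul_sum]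
  refine Fintype.sum_equiv (Equiv.mulRight ρ) _ _ fun τ => ?_
  rw [coe_mulRight, Perm.sign_mul, smul_smul, Units.val_mul, mul_left_comm, ← Units.val_mul,
    Int.units_mul_self, Units.val_one, mul_one]
  rfl

theorem antisymmetrize_comp_swap {i j : ι} (hij : i ≠ j) (F : (ι → X) → V) (x : ι → X) :
    antisymmetrize R (fun y => F (y ∘ swap i j)) x = -antisymmetrize R F x := by
  rw [antisymmetrize_comp_perm, Perm.sign_swap hij, Units.val_neg, Units.val_one, neg_one_smul]

theorem antisymmetrize_eq_zero_of_cyclic_sum_eq_zero [IsAddTorsionFree V] {F : (ι → X) → V}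
    {ρ : Perm ι} (hρ : Perm.sign ρ = 1) (hF : ∀ y, F y + F (y ∘ ρ) + F (y ∘ ρ ∘ ρ) = 0)
    (x : ι → X) : antisymmetrize R F x = 0 := by
  have hsum : (3 : ℕ) • antisymmetrize R F x = 0 := by
    calc (3 : ℕ) • antisymmetrize R F x
        = antisymmetrize R (fun y => F y + F (y ∘ ρ) + F (y ∘ (ρ * ρ : Perm ι))) x := by
          change _ = antisymmetrize R (F + (fun y => F (y ∘ ρ)) +
            fun y => F (y ∘ (ρ * ρ : Perm ι))) x
          rw [map_add, map_add, Pi.add_apply, Pi.add_apply, antisymmetrize_comp_perm,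
            antisymmetrize_comp_perm, Perm.sign_mul, hρ]
          simp only [mul_one, Units.val_one, one_smul]
          abel
      _ = antisymmetrize R 0 x := congrArg (antisymmetrize R · x) (funext hF)
      _ = 0 := by rw [map_zero, Pi.zero_apply]
  exact (smul_eq_zero_iff_right three_ne_zero).mp hsum

theorem antisymmetrize_sum_update (F : (ι → X) → V) (δ : X → X) (x : ι → X) :
    antisymmetrize R (fun y => ∑ k, F (update y k (δ (y k)))) x =
      ∑ k, antisymmetrize R F (update x k (δ (x k))) := by
  simp only [antisymmetrize_apply, smul_sum]
  rw [sum_comm (t := (univ : Finset (Perm ι)))]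
  refine sum_congr rfl fun τ _ => Fintype.sum_equiv τ _ _ fun k => ?_
  rw [← update_comp_eq_of_injective x τ.injective, comp_apply]

theorem antisymmetrize_cons {n : ℕ} (H : X → (Fin n → X) → V) (x : Fin (n + 1) → X) :
    antisymmetrize R (fun y : Fin (n + 1) → X => H (y 0) (Fin.tail y)) x =
      ∑ j : Fin (n + 1), (-1 : ℤ) ^ (j : ℕ) • antisymmetrize R (H (x j)) (j.removeNth x) := by
  simp only [antisymmetrize_apply]
  rw [← Perm.decomposeFin.symm.sum_comp, Fintype.sum_prod_type]
  refine sum_congr rfl fun j _ => ?_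
  obtain ⟨ρ, hsign, hρ⟩ : ∃ ρ : Perm (Fin n),
      (∀ e, (Perm.sign (Perm.decomposeFin.symm (j, e)) : ℤ) =
        (-1) ^ (j : ℕ) * Perm.sign (ρ * e)) ∧
      ∀ k, swap 0 j k.succ = j.succAbove (ρ k) := by
    cases j using Fin.cases with
    | zero => exact ⟨1, by simp, by simp⟩
    | succ i =>
      refine ⟨i.cycleRange, fun e => ?_, fun k => (Fin.succAbove_cycleRange i k).symm⟩
      have hsq : ((-1 : ℤ) ^ (i : ℕ)) * (-1) ^ (i : ℕ) = 1 := by rw [← mul_pow]; simp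
      rw [Perm.decomposeFin.symm_sign, if_neg (Fin.succ_ne_zero i), Perm.sign_mul,
        Fin.sign_cycleRange, Fin.val_succ, pow_succ]
      push_cast
      linear_combination (Perm.sign e : ℤ) * hsq
  rw [smul_sum]
  refine Fintype.sum_equiv (Equiv.mulLeft ρ) _ _ fun e => ?_
  rw [hsign, mul_smul, coe_mulLeft]
  congr 3
  · simp
  · funext k
    simp [Fin.tail, Fin.removeNth, hρ]

end Antisymmetrize

theorem sum_sum_ite_lt_eq_sum_sum_ge {A : Type*} [AddCommMonoid A] {n : ℕ}
    (F : Fin (n + 1) → Fin (n + 1) → A) :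
    (∑ j : Fin (n + 1), ∑ i : Fin (n + 1), if (i : ℕ) < (j : ℕ) then F i j else 0) =
      ∑ i : Fin n, ∑ j ≥ i, F i.castSucc j.succ := by
  rw [sum_comm, Fin.sum_univ_castSucc]
  simp only [Fin.sum_univ_succ (n := n), Fin.val_last, Fin.val_castSucc, Fin.val_zero,
    Fin.val_succ, Nat.not_lt_zero, if_false, zero_add]
  have hlast (j : Fin n) : ¬ n < (j : ℕ) + 1 := by lia
  simp only [hlast, if_false, sum_const_zero, add_zero]
  refine sum_congr rfl fun i _ => ?_
  simp only [Nat.lt_succ_iff, Fin.val_fin_le, ← sum_filter, filter_le_eq_Ici]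

section Differential

variable {g V : Type*} [LieRing g] [AddCommGroup V]

theorem sum_sum_update_lie_eq_two_nsmul {R : Type*} [CommRing R] [Module R g] [Module R V] {n : ℕ}
    (ω : g [⋀^Fin (n + 1)]→ₗ[R] V) (x : Fin (n + 2) → g) :
    ∑ i : Fin (n + 2), ∑ j : Fin (n + 1),
        (-1 : ℤ) ^ (i : ℕ) • ω (update (i.removeNth x) j ⁅x i, i.removeNth x j⁆) =
      2 • ∑ i : Fin (n + 1), ∑ j ≥ i, (-1 : ℤ) ^ (i + j : ℕ) •
        ω (Matrix.vecCons ⁅x i.castSucc, x j.succ⁆ (j.removeNth (i.castSucc.removeNth x))) := by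
  rw [Fin.sum_sum_eq_sum_triangle_add, smul_sum]
  refine sum_congr rfl fun i _ => ?_
  rw [smul_sum]
  refine sum_congr rfl fun j hj => ?_
  rw [mem_Ici] at hj
  have hi : i.castSucc.succAbove j = j.succ := by simp [Fin.succAbove_of_le_castSucc, hj]
  have hj' : j.succ.succAbove i = i.castSucc := by simp [Fin.succAbove_of_castSucc_lt, hj]
  have hremove : i.removeNth (j.succ.removeNth x) = j.removeNth (i.castSucc.removeNth x) := by
    rw [Fin.removeNth_removeNth_eq_swap, hj']
    simp [Fin.predAbove, hj]
  simp only [← Fin.insertNth_removeNth, AlternatingMap.map_insertNth, hremove]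
  rw [Fin.removeNth_apply, Fin.removeNth_apply, hi, hj', ← lie_skew (x j.succ) (x i.castSucc)]
  rw [← neg_one_smul R ⁅x i.castSucc, x j.succ⁆, AlternatingMap.map_vecCons_smul,
    Fin.val_castSucc, Fin.val_succ, neg_one_smul]
  module

variable [LieRingModule g V]

theorem ceDiff_succ_apply {n : ℕ} (ω : (Fin (n + 1) → g) → V) (x : Fin (n + 2) → g) :
    ceDiff (n + 1) ω x = ∑ i : Fin (n + 2), (-1 : ℤ) ^ (i : ℕ) • ⁅x i, ω (i.removeNth x)⁆ -
      ∑ i : Fin (n + 1), ∑ j ≥ i, (-1 : ℤ) ^ (i + j : ℕ) •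
        ω (Matrix.vecCons ⁅x i.castSucc, x j.succ⁆ (j.removeNth (i.castSucc.removeNth x))) := by
  rw [ceDiff, sum_sum_ite_lt_eq_sum_sum_ge, sub_eq_add_neg, ← sum_neg_distrib]
  congr 1
  refine sum_congr rfl fun i _ => ?_
  rw [← sum_neg_distrib]
  refine sum_congr rfl fun j hj => ?_
  have hsign : (-1 : ℤ) ^ ((i.castSucc : ℕ) + j.succ) = -(-1) ^ (i + j : ℕ) := by
    rw [Fin.val_castSucc, Fin.val_succ, ← add_assoc, pow_succ, mul_neg_one]
  rw [hsign, neg_smul]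
  congr 3
  funext k
  cases k using Fin.cases with
  | zero => simp
  | succ k =>
    have hij : i ≤ j := mem_Ici.mp hj
    rw [Fin.le_def] at hij
    simp only [Fin.val_succ, Nat.succ_ne_zero, if_false, Matrix.cons_val_succ, Fin.removeNth]
    congr 1
    ext
    simp only [Fin.succAbove, Fin.lt_def, Fin.val_castSucc]
    split_ifs <;> simp_all <;> lia

theorem two_nsmul_ceDiff_succ_apply {R : Type*} [CommRing R] [Module R g] [Module R V] {n : ℕ}
    (ω : g [⋀^Fin (n + 1)]→ₗ[R] V) (x : Fin (n + 2) → g) :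
    2 • ceDiff (n + 1) ω x = ∑ i : Fin (n + 2), (-1 : ℤ) ^ (i : ℕ) •
      (2 • ⁅x i, ω (i.removeNth x)⁆ -
        ∑ j, ω (update (i.removeNth x) j ⁅x i, i.removeNth x j⁆)) := by
  rw [ceDiff_succ_apply, smul_sub, ← sum_sum_update_lie_eq_two_nsmul, smul_sum,
    ← sum_sub_distrib]
  refine sum_congr rfl fun i _ => ?_
  rw [smul_sub, smul_sum, smul_comm]

theorem two_nsmul_ceDiff_alternatization_apply {R : Type*} [CommRing R] [Module R g] [Module R V]
    {n : ℕ} (φ : MultilinearMap R (fun _ : Fin (n + 1) => g) V) (x : Fin (n + 2) → g) :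
    2 • ceDiff (n + 1) (MultilinearMap.alternatization φ) x =
      antisymmetrize R (fun y : Fin (n + 2) → g => 2 • ⁅y 0, φ (Fin.tail y)⁆ -
        ∑ k, φ (update (Fin.tail y) k ⁅y 0, Fin.tail y k⁆)) x := by
  rw [two_nsmul_ceDiff_succ_apply, coe_alternatization_eq_antisymmetrize,
    antisymmetrize_cons R fun a z => 2 • ⁅a, φ z⁆ - ∑ k, φ (update z k ⁅a, z k⁆)]
  refine sum_congr rfl fun i _ => ?_
  have hlie (a : g) (z : Fin (n + 1) → g) :
      antisymmetrize R (fun z => ⁅a, φ z⁆) z = ⁅a, antisymmetrize R φ z⁆ := by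
    simp only [antisymmetrize_apply, lie_sum, lie_zsmul]
  change _ = _ • antisymmetrize R (2 • (fun z => ⁅x i, φ z⁆) -
    fun z => ∑ k, φ (update z k ⁅x i, z k⁆)) (i.removeNth x)
  rw [map_sub, map_nsmul, Pi.sub_apply, Pi.smul_apply, hlie,
    antisymmetrize_sum_update R φ fun b => ⁅x i, b⁆]

/-- The Chevalley–Eilenberg differential as a linear map on alternating maps. -/
def ceDiffLinear (R : Type*) [CommRing R] [LieAlgebra R g] [Module R V] [LieModule R g V] (m : ℕ) :
    (g [⋀^Fin m]→ₗ[R] V) →ₗ[R] ((Fin (m + 1) → g) → V) where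
  toFun η := ceDiff m η
  map_add' η θ := by
    funext x
    simp only [ceDiff, AlternatingMap.add_apply, Pi.add_apply, lie_add, smul_add,
      sum_add_distrib, ite_add_zero]
    abel
  map_smul' c η := by
    funext x
    simp only [ceDiff, AlternatingMap.smul_apply, Pi.smul_apply, lie_smul, RingHom.id_apply,
      smul_add, smul_sum, smul_ite, smul_zero, smul_comm c]

end Differential

section Pairs

variable {r : ℕ}

/-- The enumeration of the `2 * r` arguments of a cochain by `r` consecutive pairs: the pair `s`
consists of the arguments `2 * s` and `2 * s + 1`. -/
def pairIndex : Fin r × Fin 2 ≃ Fin (2 * r) :=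
  finProdFinEquiv.trans (finCongr (mul_comm r 2))

theorem val_pairIndex (s : Fin r) (b : Fin 2) : (pairIndex (s, b) : ℕ) = b + 2 * s := rfl

theorem pairIndex_succ (s : Fin r) (b : Fin 2) :
    pairIndex (s.succ, b) = (pairIndex (s, b)).succ.succ := by
  ext
  simp only [val_pairIndex, Fin.val_succ]
  lia

/-- The permutation of `2 * r` arguments that permutes the consecutive pairs by `τ`. -/
def pairPerm (τ : Perm (Fin r)) : Perm (Fin (2 * r)) :=
  pairIndex.permCongr (prodCongrLeft fun _ => τ)

theorem pairPerm_pairIndex (τ : Perm (Fin r)) (s : Fin r) (b : Fin 2) :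
    pairPerm τ (pairIndex (s, b)) = pairIndex (τ s, b) := by
  simp [pairPerm, permCongr_apply]

theorem sign_pairPerm (τ : Perm (Fin r)) : Perm.sign (pairPerm τ) = 1 := by
  rw [pairPerm, Perm.sign_permCongr, Perm.sign_prodCongrLeft, Fin.prod_univ_two,
    Int.units_mul_self]

variable {K g N V : Type*} [CommRing K] [AddCommGroup g] [Module K g] [AddCommGroup N] [Module K N]
  [AddCommGroup V] [Module K V]

/-- The tuple obtained by applying the `s`-th bilinear map of a family to the `s`-th pair of
arguments. -/
def evalPairs (B : Fin r → g →ₗ[K] g →ₗ[K] N) (y : Fin (2 * r) → g) (s : Fin r) : N :=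
  B s (y (pairIndex (s, 0))) (y (pairIndex (s, 1)))

theorem evalPairs_update_fst (B : Fin r → g →ₗ[K] g →ₗ[K] N) (y : Fin (2 * r) → g) (s : Fin r)
    (a : g) : evalPairs B (update y (pairIndex (s, 0)) a) =
      update (evalPairs B y) s (B s a (y (pairIndex (s, 1)))) := by
  funext t
  obtain rfl | hts := eq_or_ne t s <;> simp [evalPairs, *]

theorem evalPairs_update_snd (B : Fin r → g →ₗ[K] g →ₗ[K] N) (y : Fin (2 * r) → g) (s : Fin r)
    (a : g) : evalPairs B (update y (pairIndex (s, 1)) a) =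
      update (evalPairs B y) s (B s (y (pairIndex (s, 0))) a) := by
  funext t
  obtain rfl | hts := eq_or_ne t s <;> simp [evalPairs, *]

theorem evalPairs_comp_perm (B : Fin r → g →ₗ[K] g →ₗ[K] N) (y : Fin (2 * r) → g)
    (τ : Perm (Fin r)) : evalPairs (B ∘ τ) (y ∘ pairPerm τ) = evalPairs B y ∘ τ := by
  funext s
  simp [evalPairs, pairPerm_pairIndex]

theorem evalPairs_cons (B₀ : g →ₗ[K] g →ₗ[K] N) (B : Fin r → g →ₗ[K] g →ₗ[K] N)
    (y : Fin (2 * r + 2) → g) :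
    evalPairs (Fin.cons B₀ B : Fin (r + 1) → g →ₗ[K] g →ₗ[K] N) y =
      Fin.cons (B₀ (y 0) (y 1)) (evalPairs B (Fin.tail (Fin.tail y))) := by
  funext s
  cases s using Fin.cases with
  | zero => rfl
  | succ s => simp [evalPairs, pairIndex_succ, Fin.tail]

/-- The multilinear form obtained from `f` by filling its `s`-th argument with the value of the
bilinear map `B s` on the `s`-th pair of arguments. -/
def pairForm (f : MultilinearMap K (fun _ : Fin r => N) V) (B : Fin r → g →ₗ[K] g →ₗ[K] N) :
    MultilinearMap K (fun _ : Fin (2 * r) => g) V :=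
  MultilinearMap.mk' (fun y => f (evalPairs B y))
    (by
      intro y k a b
      obtain ⟨⟨s, i⟩, rfl⟩ := pairIndex.surjective k
      fin_cases i <;> simp [evalPairs_update_fst, evalPairs_update_snd])
    (by
      intro y k c a
      obtain ⟨⟨s, i⟩, rfl⟩ := pairIndex.surjective k
      fin_cases i <;> simp [evalPairs_update_fst, evalPairs_update_snd])

theorem pairForm_apply (f : MultilinearMap K (fun _ : Fin r => N) V)
    (B : Fin r → g →ₗ[K] g →ₗ[K] N) (y : Fin (2 * r) → g) :
    pairForm f B y = f (evalPairs B y) := rfl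

theorem sum_pairForm_update (f : MultilinearMap K (fun _ : Fin r => N) V)
    (B : Fin r → g →ₗ[K] g →ₗ[K] N) (δ : g → g) (y : Fin (2 * r) → g) :
    ∑ k, pairForm f B (update y k (δ (y k))) =
      ∑ s, f (update (evalPairs B y) s
        (B s (δ (y (pairIndex (s, 0)))) (y (pairIndex (s, 1))) +
          B s (y (pairIndex (s, 0))) (δ (y (pairIndex (s, 1)))))) := by
  rw [← pairIndex.sum_comp, Fintype.sum_prod_type]
  refine sum_congr rfl fun s _ => ?_
  rw [Fin.sum_univ_two, pairForm_apply, pairForm_apply, evalPairs_update_fst,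
    evalPairs_update_snd, MultilinearMap.map_update_add]

theorem antisymmetrize_pairForm_comp_perm {f : MultilinearMap K (fun _ : Fin r => N) V}
    (hf : ∀ (z : Fin r → N) (τ : Perm (Fin r)), f (fun i => z (τ i)) = f z)
    (B : Fin r → g →ₗ[K] g →ₗ[K] N) (τ : Perm (Fin r)) (x : Fin (2 * r) → g) :
    antisymmetrize K (pairForm f (B ∘ τ)) x = antisymmetrize K (pairForm f B) x := by
  calc antisymmetrize K (pairForm f (B ∘ τ)) x
      = antisymmetrize K (fun y => pairForm f (B ∘ τ) (y ∘ pairPerm τ)) x := by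
        rw [antisymmetrize_comp_perm, sign_pairPerm, Units.val_one, one_smul]
    _ = antisymmetrize K (pairForm f B) x := by
        simp only [pairForm_apply, evalPairs_comp_perm]
        exact congrArg (antisymmetrize K · x) (funext fun y => hf _ τ)

/-- The antisymmetrization of `pairForm f B` as a multilinear function of the family `B`; on a
constant family `R` it is, up to a power of two, the Chern–Weil cochain of `f` and `R`. -/
def polarizedChernWeil (f : MultilinearMap K (fun _ : Fin r => N) V) :
    MultilinearMap K (fun _ : Fin r => g →ₗ[K] g →ₗ[K] N) ((Fin (2 * r) → g) → V) :=
  (antisymmetrize K).compMultilinearMap <| MultilinearMap.pi fun y => f.compLinearMap fun s =>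
    LinearMap.applyₗ (y (pairIndex (s, 1))) ∘ₗ LinearMap.applyₗ (y (pairIndex (s, 0)))

theorem polarizedChernWeil_apply (f : MultilinearMap K (fun _ : Fin r => N) V)
    (B : Fin r → g →ₗ[K] g →ₗ[K] N) :
    polarizedChernWeil f B = antisymmetrize K (pairForm f B) := rfl

end Pairs

section Transgression

variable {K g N V : Type*} [CommRing K] [LieRing g] [LieAlgebra K g] [AddCommGroup N] [Module K N]
  [AddCommGroup V] [Module K V] {r : ℕ}

/-- The transgression form `f(D(y₀), R(y₁, y₂), …, R(y₂ᵣ₋₁, y₂ᵣ))`, before antisymmetrization. -/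
def transgression (f : MultilinearMap K (fun _ : Fin (r + 1) => N) V) (D : g →ₗ[K] N)
    (R : g →ₗ[K] g →ₗ[K] N) : MultilinearMap K (fun _ : Fin (2 * r + 1) => g) V :=
  LinearMap.uncurryLeft
    { toFun := fun a => pairForm (f.curryLeft (D a)) fun _ => R
      map_add' := fun a b => by ext; simp [pairForm_apply]
      map_smul' := fun c a => by ext; simp [pairForm_apply] }

theorem transgression_apply (f : MultilinearMap K (fun _ : Fin (r + 1) => N) V) (D : g →ₗ[K] N)
    (R : g →ₗ[K] g →ₗ[K] N) (y : Fin (2 * r + 1) → g) :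
    transgression f D R y = pairForm (f.curryLeft (D (y 0))) (fun _ => R) (Fin.tail y) := rfl

theorem sum_transgression_update (f : MultilinearMap K (fun _ : Fin (r + 1) => N) V)
    (D : g →ₗ[K] N) (R : g →ₗ[K] g →ₗ[K] N) (δ : g → g) (y : Fin (2 * r + 1) → g) :
    ∑ k, transgression f D R (update y k (δ (y k))) =
      pairForm (f.curryLeft (D (δ (y 0)))) (fun _ => R) (Fin.tail y) +
        ∑ k, pairForm (f.curryLeft (D (y 0))) (fun _ => R)
          (update (Fin.tail y) k (δ (Fin.tail y k))) := by
  rw [Fin.sum_univ_succ]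
  simp only [transgression_apply, Fin.tail_update_zero, Fin.tail_update_succ, update_self,
    update_of_ne (Fin.succ_ne_zero _).symm]
  rfl

/-- The covariant differential `dD + S ∧ D` of an `N`-valued 1-cochain `D` with respect to
`S : g → End N`. -/
def covDeriv (S : g →ₗ[K] N →ₗ[K] N) (D : g →ₗ[K] N) : g →ₗ[K] g →ₗ[K] N :=
  S.compl₂ D - (S.compl₂ D).flip - (LieModule.toEnd K g g : g →ₗ[K] Module.End K g).compr₂ D

theorem covDeriv_apply (S : g →ₗ[K] N →ₗ[K] N) (D : g →ₗ[K] N) (a b : g) :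
    covDeriv S D a b = S a (D b) - S b (D a) - D ⁅a, b⁆ := rfl

theorem antisymmetrize_pairForm_covDeriv (f : MultilinearMap K (fun _ : Fin (r + 1) => N) V)
    (S : g →ₗ[K] N →ₗ[K] N) (D : g →ₗ[K] N) (R : g →ₗ[K] g →ₗ[K] N) (x : Fin (2 * r + 2) → g) :
    antisymmetrize K (pairForm f (Fin.cons (covDeriv S D) fun _ => R :
        Fin (r + 1) → g →ₗ[K] g →ₗ[K] N)) x =
      antisymmetrize K (fun y : Fin (2 * r + 2) → g =>
        f.curryLeft (2 • S (y 0) (D (y 1)) - D ⁅y 0, y 1⁆)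
          (evalPairs (fun _ => R) (Fin.tail (Fin.tail y)))) x := by
  set P : (Fin (2 * r + 2) → g) → V := fun y =>
    f.curryLeft (S (y 0) (D (y 1))) (evalPairs (fun _ => R) (Fin.tail (Fin.tail y)))
  set Q : (Fin (2 * r + 2) → g) → V := fun y =>
    f.curryLeft (D ⁅y 0, y 1⁆) (evalPairs (fun _ => R) (Fin.tail (Fin.tail y)))
  have hswap : antisymmetrize K (fun y => P (y ∘ swap 0 1)) x = -antisymmetrize K P x :=
    antisymmetrize_comp_swap K (by simp) P x
  have hcov : pairForm f (Fin.cons (covDeriv S D) fun _ => R :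
      Fin (r + 1) → g →ₗ[K] g →ₗ[K] N) = P - (fun y => P (y ∘ swap 0 1)) - Q := by
    funext y
    have htail : Fin.tail (Fin.tail (y ∘ swap 0 1)) = Fin.tail (Fin.tail y) := by
      funext k
      simp [Fin.tail, swap_apply_of_ne_of_ne, Fin.ext_iff]
    simp only [pairForm_apply, evalPairs_cons, ← MultilinearMap.curryLeft_apply, covDeriv_apply,
      map_sub, _root_.sub_apply, Pi.sub_apply, P, Q, comp_apply, swap_apply_left,
      swap_apply_right, htail]
  have htwo : (fun y : Fin (2 * r + 2) → g =>
      f.curryLeft (2 • S (y 0) (D (y 1)) - D ⁅y 0, y 1⁆)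
        (evalPairs (fun _ => R) (Fin.tail (Fin.tail y)))) = 2 • P - Q := by
    funext y
    simp [P, Q]
  rw [hcov, htwo]
  simp only [map_sub, map_nsmul, Pi.sub_apply, Pi.smul_apply, hswap]
  abel

theorem exists_perm_cyclic {ι : Type*} [Fintype ι] [DecidableEq ι] {a b c : ι} (hab : a ≠ b)
    (hbc : b ≠ c) (hac : a ≠ c) : ∃ ρ : Perm ι, Perm.sign ρ = 1 ∧ ρ a = b ∧ ρ b = c ∧ ρ c = a ∧
      ∀ k, k ≠ a → k ≠ b → k ≠ c → ρ k = k := by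
  refine ⟨swap a c * swap a b, (Perm.isThreeCycle_swap_mul_swap_same hac hab hbc.symm).sign,
    ?_, ?_, ?_, fun k ha hb hc => ?_⟩
  · simp [swap_apply_of_ne_of_ne hab.symm hbc]
  · simp
  · simp [swap_apply_of_ne_of_ne hac.symm hbc.symm]
  · simp [swap_apply_of_ne_of_ne ha hb, swap_apply_of_ne_of_ne ha hc]

theorem antisymmetrize_curryLeft_update_eq_zero [IsAddTorsionFree V]
    (f : MultilinearMap K (fun _ : Fin (r + 1) => N) V) (D : g →ₗ[K] N) (R : g →ₗ[K] g →ₗ[K] N)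
    {T : g → g → g → N} (hT : ∀ a b c, T a b c + T b c a + T c a b = 0) (s : Fin r)
    (x : Fin (2 * r + 2) → g) :
    antisymmetrize K (fun y : Fin (2 * r + 2) → g => f.curryLeft (D (y 1))
      (update (evalPairs (fun _ => R) (Fin.tail (Fin.tail y))) s
        (T (y 0) (y (pairIndex (s, 0)).succ.succ) (y (pairIndex (s, 1)).succ.succ)))) x = 0 := by
  set P : Fin (2 * r + 2) := (pairIndex (s, 0)).succ.succ with hP
  set Q : Fin (2 * r + 2) := (pairIndex (s, 1)).succ.succ with hQ
  have h0P : 0 ≠ P := (Fin.succ_ne_zero _).symm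
  have h0Q : 0 ≠ Q := (Fin.succ_ne_zero _).symm
  have hPQ : P ≠ Q := by simp [hP, hQ]
  obtain ⟨ρ, hsign, hρ0, hρP, hρQ, hρfix⟩ := exists_perm_cyclic h0P hPQ h0Q
  have hρ1 : ρ 1 = 1 := by
    apply hρfix <;> simp [hP, hQ, Fin.ext_iff]
  have hupdate (y : Fin (2 * r + 2) → g) (v : N) :
      update (evalPairs (fun _ => R) (Fin.tail (Fin.tail (y ∘ ρ)))) s v =
        update (evalPairs (fun _ => R) (Fin.tail (Fin.tail y))) s v := by
    funext t
    obtain rfl | hts := eq_or_ne t s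
    · simp
    · have hfix (b : Fin 2) : ρ (pairIndex (t, b)).succ.succ = (pairIndex (t, b)).succ.succ := by
        apply hρfix <;> simp [hP, hQ, hts]
      simp [update_of_ne hts, evalPairs, Fin.tail, hfix]
  refine antisymmetrize_eq_zero_of_cyclic_sum_eq_zero K hsign (fun y => ?_) x
  change _ + f.curryLeft (D (y (ρ 1))) _ + f.curryLeft (D (y (ρ (ρ 1)))) _ = 0
  simp only [← comp_assoc, hupdate, comp_apply, hρ0, hρP, hρQ, hρ1]
  rw [← MultilinearMap.map_update_add, ← MultilinearMap.map_update_add, hT]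
  exact MultilinearMap.map_coord_zero _ s (update_self ..)

variable {S : g →ₗ[K] N →ₗ[K] N} {R : g →ₗ[K] g →ₗ[K] N}

theorem cyclic_sum_lie_defect_eq_zero (hskew : ∀ a b, R a b = -R b a)
    (hbianchi : ∀ a b c, (S a (R b c) - R ⁅a, b⁆ c) + (S b (R c a) - R ⁅b, c⁆ a) +
      (S c (R a b) - R ⁅c, a⁆ b) = 0) (a b c : g) :
    (2 • S a (R b c) - (R ⁅a, b⁆ c + R b ⁅a, c⁆)) + (2 • S b (R c a) - (R ⁅b, c⁆ a + R c ⁅b, a⁆)) +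
      (2 • S c (R a b) - (R ⁅c, a⁆ b + R a ⁅c, b⁆)) = 0 := by
  have hcomm (u v w : g) : R u ⁅v, w⁆ = R ⁅w, v⁆ u := by
    rw [hskew, ← lie_skew, map_neg, LinearMap.neg_apply, neg_neg]
  rw [hcomm b, hcomm c, hcomm a]
  rw [← smul_zero (2 : ℕ), ← hbianchi a b c]
  abel

theorem lie_curryLeft_apply [LieRingModule g V] {f : MultilinearMap K (fun _ : Fin (r + 1) => N) V}
    (hinv : ∀ a (z : Fin (r + 1) → N), ⁅a, f z⁆ = ∑ i, f (update z i (S a (z i)))) (a : g) (d : N)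
    (z : Fin r → N) : ⁅a, f.curryLeft d z⁆ = f.curryLeft (S a d) z +
      ∑ s, f.curryLeft d (update z s (S a (z s))) := by
  simp only [MultilinearMap.curryLeft_apply, hinv, Fin.sum_univ_succ, Fin.cons_zero, Fin.cons_succ,
    Fin.update_cons_zero, Fin.cons_update]

theorem two_nsmul_lie_transgression_sub [LieRingModule g V]
    {f : MultilinearMap K (fun _ : Fin (r + 1) => N) V}
    (hinv : ∀ a (z : Fin (r + 1) → N), ⁅a, f z⁆ = ∑ i, f (update z i (S a (z i))))
    (D : g →ₗ[K] N) (a : g) (y : Fin (2 * r + 1) → g) :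
    2 • ⁅a, transgression f D R y⁆ - ∑ k, transgression f D R (update y k ⁅a, y k⁆) =
      f.curryLeft (2 • S a (D (y 0)) - D ⁅a, y 0⁆) (evalPairs (fun _ => R) (Fin.tail y)) +
        ∑ s, f.curryLeft (D (y 0)) (update (evalPairs (fun _ => R) (Fin.tail y)) s
          (2 • S a (R (y (pairIndex (s, 0)).succ) (y (pairIndex (s, 1)).succ)) -
            (R ⁅a, y (pairIndex (s, 0)).succ⁆ (y (pairIndex (s, 1)).succ) +
              R (y (pairIndex (s, 0)).succ) ⁅a, y (pairIndex (s, 1)).succ⁆))) := by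
  rw [sum_transgression_update f D R (fun b => ⁅a, b⁆), transgression_apply, pairForm_apply,
    lie_curryLeft_apply hinv, sum_pairForm_update _ _ fun b => ⁅a, b⁆, pairForm_apply,
    smul_add, smul_sum, add_sub_add_comm, ← sum_sub_distrib, map_sub, map_nsmul]
  congr 1
  refine sum_congr rfl fun s _ => ?_
  rw [MultilinearMap.map_update_sub, ← Nat.cast_smul_eq_nsmul K 2 (S a _),
    MultilinearMap.map_update_smul, Nat.cast_smul_eq_nsmul]
  rfl

theorem two_nsmul_ceDiff_transgression [IsAddTorsionFree V] [LieRingModule g V]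
    {f : MultilinearMap K (fun _ : Fin (r + 1) => N) V}
    (hinv : ∀ a (z : Fin (r + 1) → N), ⁅a, f z⁆ = ∑ i, f (update z i (S a (z i))))
    (hskew : ∀ a b, R a b = -R b a)
    (hbianchi : ∀ a b c, (S a (R b c) - R ⁅a, b⁆ c) + (S b (R c a) - R ⁅b, c⁆ a) +
      (S c (R a b) - R ⁅c, a⁆ b) = 0) (D : g →ₗ[K] N) :
    2 • ceDiff (2 * r + 1) (MultilinearMap.alternatization (transgression f D R)) =
      antisymmetrize K (pairForm f (Fin.cons (covDeriv S D) fun _ => R :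
        Fin (r + 1) → g →ₗ[K] g →ₗ[K] N)) := by
  funext x
  rw [Pi.smul_apply, two_nsmul_ceDiff_alternatization_apply, antisymmetrize_pairForm_covDeriv]
  set main : (Fin (2 * r + 2) → g) → V := fun y =>
    f.curryLeft (2 • S (y 0) (D (y 1)) - D ⁅y 0, y 1⁆)
      (evalPairs (fun _ => R) (Fin.tail (Fin.tail y)))
  set slot : Fin r → (Fin (2 * r + 2) → g) → V := fun s y => f.curryLeft (D (y 1))
    (update (evalPairs (fun _ => R) (Fin.tail (Fin.tail y))) s
      (2 • S (y 0) (R (y (pairIndex (s, 0)).succ.succ) (y (pairIndex (s, 1)).succ.succ)) -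
        (R ⁅y 0, y (pairIndex (s, 0)).succ.succ⁆ (y (pairIndex (s, 1)).succ.succ) +
          R (y (pairIndex (s, 0)).succ.succ) ⁅y 0, y (pairIndex (s, 1)).succ.succ⁆)))
  have hslot (s : Fin r) : antisymmetrize K (slot s) x = 0 :=
    antisymmetrize_curryLeft_update_eq_zero f D R
      (T := fun a b c => 2 • S a (R b c) - (R ⁅a, b⁆ c + R b ⁅a, c⁆))
      (cyclic_sum_lie_defect_eq_zero hskew hbianchi) s x
  have hsplit : (fun y : Fin (2 * r + 2) → g => 2 • ⁅y 0, transgression f D R (Fin.tail y)⁆ -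
      ∑ k, transgression f D R (update (Fin.tail y) k ⁅y 0, Fin.tail y k⁆)) =
      main + ∑ s, slot s := by
    funext y
    rw [two_nsmul_lie_transgression_sub hinv, Pi.add_apply, Finset.sum_apply]
    rfl
  rw [hsplit, map_add, map_sum, Pi.add_apply, Finset.sum_apply, sum_eq_zero fun s _ => hslot s,
    add_zero]

theorem linearDeriv_polarizedChernWeil_mem_range [IsAddTorsionFree V] [LieRingModule g V]
    [LieModule K g V] {f : MultilinearMap K (fun _ : Fin (r + 1) => N) V}
    (hsym : ∀ (z : Fin (r + 1) → N) (τ : Perm (Fin (r + 1))), f (fun i => z (τ i)) = f z)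
    (hinv : ∀ a (z : Fin (r + 1) → N), ⁅a, f z⁆ = ∑ i, f (update z i (S a (z i))))
    (hskew : ∀ a b, R a b = -R b a)
    (hbianchi : ∀ a b c, (S a (R b c) - R ⁅a, b⁆ c) + (S b (R c a) - R ⁅b, c⁆ a) +
      (S c (R a b) - R ⁅c, a⁆ b) = 0) (D : g →ₗ[K] N) :
    (polarizedChernWeil f).linearDeriv (fun _ => R) (fun _ => covDeriv S D) ∈
      LinearMap.range (ceDiffLinear K (g := g) (V := V) (2 * r + 1)) := by
  rw [MultilinearMap.linearDeriv_apply]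
  refine sum_mem fun i _ => ?_
  have hcons : update (fun _ => R) i (covDeriv S D) =
      (Fin.cons (covDeriv S D) fun _ => R : Fin (r + 1) → g →ₗ[K] g →ₗ[K] N) ∘ swap 0 i := by
    rw [← Fin.update_cons_zero R, update_comp_equiv, symm_swap, swap_apply_left]
    have hconst : (Fin.cons R fun _ => R : Fin (r + 1) → g →ₗ[K] g →ₗ[K] N) = fun _ => R :=
      funext fun j => by cases j using Fin.cases <;> rfl
    rw [hconst]
    rfl
  rw [hcons, polarizedChernWeil_apply,
    funext (antisymmetrize_pairForm_comp_perm hsym _ (swap 0 i)),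
    ← two_nsmul_ceDiff_transgression hinv hskew hbianchi D]
  exact nsmul_mem (LinearMap.mem_range_self _ _) 2

end Transgression

section Paths

theorem continuous_multilinearMap_pi {ι κ K E : Type*} [Finite ι] [Finite κ]
    [CommSemiring K] [TopologicalSpace K] [IsTopologicalSemiring K] [AddCommMonoid E]
    [Module K E] [TopologicalSpace E] [ContinuousAdd E] [ContinuousSMul K E]
    (M : MultilinearMap K (fun _ : ι => κ → K) E) : Continuous M := by
  classical
  have := Fintype.ofFinite ι
  have := Fintype.ofFinite κ
  have hexpand : ⇑M = fun v => ∑ k : ι → κ, (∏ i, v i (k i)) • M fun i => Pi.single (k i) 1 := by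
    funext v
    conv_lhs => rw [show v = fun i => ∑ k, v i k • Pi.single k 1 from
      funext fun i => pi_eq_sum_univ' (v i)]
    simp only [MultilinearMap.map_sum, MultilinearMap.map_smul_univ]
  rw [hexpand]
  fun_prop

variable {ι κ W X : Type*} [Fintype ι] [DecidableEq ι] [Finite κ] [AddCommGroup W] [Module ℝ W]
  [AddCommGroup X] [Module ℝ X]

theorem hasDerivAt_multilinearMap_diag (M : MultilinearMap ℝ (fun _ : ι => W) ℝ)
    (L : (κ → ℝ) →ₗ[ℝ] W) {u : ℝ → κ → ℝ} {u' : κ → ℝ} {t : ℝ} (hu : HasDerivAt u u' t) :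
    HasDerivAt (fun t => M fun _ => L (u t))
      (M.linearDeriv (fun _ => L (u t)) fun _ => L u') t := by
  have := Fintype.ofFinite κ
  let ML : ContinuousMultilinearMap ℝ (fun _ : ι => κ → ℝ) ℝ :=
    ⟨M.compLinearMap fun _ => L, continuous_multilinearMap_pi _⟩
  have hdiag : HasDerivAt (fun t => fun _ : ι => u t) (fun _ => u') t :=
    hasDerivAt_pi.mpr fun _ => hu
  refine ((ML.hasFDerivAt fun _ => u t).comp_hasDerivAt t hdiag).congr_deriv ?_
  rw [MultilinearMap.linearDeriv_apply, ContinuousMultilinearMap.linearDeriv_apply]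
  refine sum_congr rfl fun i _ => ?_
  change M (fun j => L (update (fun _ => u t) i u' j)) = _
  congr 1
  funext j
  exact apply_update (fun _ => L) (fun _ => u t) i u' j

theorem sub_mem_of_linearDeriv_mem (M : MultilinearMap ℝ (fun _ : ι => W) X) (U : Submodule ℝ X)
    (L : (κ → ℝ) →ₗ[ℝ] W) {u u' : ℝ → κ → ℝ} (hu : ∀ t, HasDerivAt u (u' t) t)
    (hU : ∀ t, M.linearDeriv (fun _ => L (u t)) (fun _ => L (u' t)) ∈ U) (s t : ℝ) :
    M (fun _ => L (u s)) - M (fun _ => L (u t)) ∈ U := by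
  by_contra hnot
  obtain ⟨l, hl, hle⟩ := Submodule.exists_le_ker_of_notMem hnot
  have hderiv (t : ℝ) : HasDerivAt (fun t => l (M fun _ => L (u t))) 0 t := by
    refine (hasDerivAt_multilinearMap_diag (l.compMultilinearMap M) L (hu t)).congr_deriv ?_
    rw [← LinearMap.mem_ker.mp (hle (hU t))]
    simp [MultilinearMap.linearDeriv_apply]
  apply hl
  rw [map_sub, sub_eq_zero]
  exact is_const_of_deriv_eq_zero (fun t => (hderiv t).differentiableAt)
    (fun t => (hderiv t).deriv) s t

end Paths

section Curvature

variable {g gh : Type*} [LieRing g] [LieAlgebra ℝ g] [LieRing gh] [LieAlgebra ℝ gh]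
  (π : gh →ₗ⁅ℝ⁆ g)

/-- The curvature of a linear section as a bilinear map. -/
def curvature (σ : g →ₗ[ℝ] gh) (hσ : ∀ x, π (σ x) = x) : g →ₗ[ℝ] g →ₗ[ℝ] π.ker :=
  LinearMap.mk₂ ℝ (curvKer π σ hσ)
    (fun a b c => Subtype.ext <| by
      simp only [curvKer, map_add, add_lie, LieSubmodule.coe_add]
      abel)
    (fun k a b => Subtype.ext <| by simp [curvKer, smul_sub])
    (fun a b c => Subtype.ext <| by
      simp only [curvKer, map_add, lie_add, LieSubmodule.coe_add]
      abel)
    (fun k a b => Subtype.ext <| by simp [curvKer, smul_sub])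

variable {π}

theorem coe_curvature_apply (σ : g →ₗ[ℝ] gh) (hσ : ∀ x, π (σ x) = x) (a b : g) :
    (curvature π σ hσ a b : gh) = ⁅σ a, σ b⁆ - σ ⁅a, b⁆ := rfl

theorem curvature_skew (σ : g →ₗ[ℝ] gh) (hσ : ∀ x, π (σ x) = x) (a b : g) :
    curvature π σ hσ a b = -curvature π σ hσ b a := by
  ext
  rw [LieSubmodule.coe_neg, coe_curvature_apply, coe_curvature_apply, ← lie_skew (σ a),
    ← lie_skew a, map_neg]
  abel

variable (π) in
/-- The connection `x ↦ ⁅σ x, ·⁆` on the kernel of `π` induced by a linear map `σ : g → gh`; it is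
not a representation of `g` in general. -/
def connection (σ : g →ₗ[ℝ] gh) : g →ₗ[ℝ] π.ker →ₗ[ℝ] π.ker :=
  (LieModule.toEnd ℝ gh π.ker : gh →ₗ[ℝ] Module.End ℝ π.ker) ∘ₗ σ

theorem connection_apply (σ : g →ₗ[ℝ] gh) (a : g) (n : π.ker) :
    connection π σ a n = ⁅σ a, n⁆ := rfl

theorem curvature_bianchi (σ : g →ₗ[ℝ] gh) (hσ : ∀ x, π (σ x) = x) (a b c : g) :
    (connection π σ a (curvature π σ hσ b c) - curvature π σ hσ ⁅a, b⁆ c) +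
      (connection π σ b (curvature π σ hσ c a) - curvature π σ hσ ⁅b, c⁆ a) +
      (connection π σ c (curvature π σ hσ a b) - curvature π σ hσ ⁅c, a⁆ b) = 0 := by
  have hjacobi : ⁅σ a, ⁅σ b, σ c⁆⁆ + ⁅σ b, ⁅σ c, σ a⁆⁆ + ⁅σ c, ⁅σ a, σ b⁆⁆ = 0 := lie_jacobi _ _ _
  have hσjacobi : σ ⁅a, ⁅b, c⁆⁆ + σ ⁅b, ⁅c, a⁆⁆ + σ ⁅c, ⁅a, b⁆⁆ = 0 := by
    rw [← map_add, ← map_add, lie_jacobi, map_zero]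
  ext
  simp only [connection_apply, LieSubmodule.coe_add, LieSubmodule.coe_sub,
    LieSubmodule.coe_bracket, LieSubmodule.coe_zero, coe_curvature_apply, lie_sub]
  rw [← lie_skew (σ ⁅a, b⁆), ← lie_skew (σ ⁅b, c⁆), ← lie_skew (σ ⁅c, a⁆),
    ← lie_skew ⁅a, b⁆ c, ← lie_skew ⁅b, c⁆ a, ← lie_skew ⁅c, a⁆ b, map_neg, map_neg, map_neg,
    ← sub_eq_zero.mpr (hjacobi.trans hσjacobi.symm)]
  abel

/-- The linear map `σ + D`, a section of `π` whenever `σ` is one. -/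
def shift (σ : g →ₗ[ℝ] gh) (D : g →ₗ[ℝ] π.ker) : g →ₗ[ℝ] gh :=
  σ + (π.ker.incl : π.ker →ₗ[ℝ] gh) ∘ₗ D

theorem shift_apply (σ : g →ₗ[ℝ] gh) (D : g →ₗ[ℝ] π.ker) (x : g) : shift σ D x = σ x + D x := rfl

theorem map_shift_apply {σ : g →ₗ[ℝ] gh} (hσ : ∀ x, π (σ x) = x) (D : g →ₗ[ℝ] π.ker) (x : g) :
    π (shift σ D x) = x := by
  rw [shift_apply, map_add, hσ, LieHom.mem_ker.mp (D x).2, add_zero]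

theorem shift_zero (σ : g →ₗ[ℝ] gh) : shift σ (0 : g →ₗ[ℝ] π.ker) = σ := by
  rw [shift, LinearMap.comp_zero, add_zero]

theorem exists_eq_shift {σ₀ σ₁ : g →ₗ[ℝ] gh} (h₀ : ∀ x, π (σ₀ x) = x) (h₁ : ∀ x, π (σ₁ x) = x) :
    ∃ D : g →ₗ[ℝ] π.ker, σ₁ = shift σ₀ D :=
  ⟨(σ₁ - σ₀).codRestrict π.ker.toSubmodule fun x => by simp [h₀, h₁],
    LinearMap.ext fun x => (add_sub_cancel (σ₀ x) (σ₁ x)).symm⟩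

/-- The bilinear map `(x, y) ↦ ⁅D x, D y⁆`, i.e. half the bracket square of the 1-cochain `D`. -/
def bracketSquare (D : g →ₗ[ℝ] π.ker) : g →ₗ[ℝ] g →ₗ[ℝ] π.ker :=
  (LieModule.toEnd ℝ π.ker π.ker : π.ker →ₗ[ℝ] Module.End ℝ π.ker).compl₁₂ D D

theorem coe_bracketSquare_apply (D : g →ₗ[ℝ] π.ker) (a b : g) :
    (bracketSquare D a b : gh) = ⁅(D a : gh), (D b : gh)⁆ := rfl

theorem curvature_shift_smul {σ : g →ₗ[ℝ] gh} (hσ : ∀ x, π (σ x) = x) (D : g →ₗ[ℝ] π.ker)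
    (t : ℝ) : curvature π (shift σ (t • D)) (map_shift_apply hσ _) =
      curvature π σ hσ + t • covDeriv (connection π σ) D + t ^ 2 • bracketSquare D := by
  ext a b
  simp only [coe_curvature_apply, coe_bracketSquare_apply, covDeriv_apply, connection_apply,
    shift_apply, LinearMap.add_apply, LinearMap.smul_apply, LieSubmodule.coe_add,
    LieSubmodule.coe_sub, LieSubmodule.coe_smul, LieSubmodule.coe_bracket]
  rw [← lie_skew (σ b)]
  simp only [lie_add, add_lie, lie_smul, smul_lie]
  module

theorem covDeriv_connection_shift_smul (σ : g →ₗ[ℝ] gh) (D : g →ₗ[ℝ] π.ker) (t : ℝ) :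
    covDeriv (connection π (shift σ (t • D))) D =
      covDeriv (connection π σ) D + (2 * t) • bracketSquare D := by
  ext a b
  simp only [coe_bracketSquare_apply, covDeriv_apply, connection_apply, shift_apply,
    LinearMap.add_apply, LinearMap.smul_apply, LieSubmodule.coe_add, LieSubmodule.coe_sub,
    LieSubmodule.coe_smul, LieSubmodule.coe_bracket, add_lie, smul_lie]
  rw [← lie_skew (D b : gh)]
  module

end Curvature

section ChernWeil

variable {g gh V : Type*} [LieRing g] [LieAlgebra ℝ g] [LieRing gh] [LieAlgebra ℝ gh]
  [AddCommGroup V] [Module ℝ V] {π : gh →ₗ⁅ℝ⁆ g} {r : ℕ}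

theorem chernWeil_eq_smul_polarizedChernWeil (f : MultilinearMap ℝ (fun _ : Fin r => π.ker) V)
    (σ : g →ₗ[ℝ] gh) (hσ : ∀ x, π (σ x) = x) :
    chernWeil π r (2 * r) rfl σ hσ f =
      ((2 : ℝ) ^ r)⁻¹ • polarizedChernWeil f fun _ => curvature π σ hσ := by
  have hpairs (y : Fin (2 * r) → g) : evalPairs (fun _ => curvature π σ hσ) y =
      fun s : Fin r => curvKer π σ hσ (y ⟨2 * s, by lia⟩) (y ⟨2 * s + 1, by lia⟩) := by
    funext s
    have hfst : pairIndex (s, 0) = ⟨2 * s, by lia⟩ := Fin.ext (by simp [val_pairIndex])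
    have hsnd : pairIndex (s, 1) = ⟨2 * s + 1, by lia⟩ :=
      Fin.ext (by simp [val_pairIndex, add_comm])
    rw [evalPairs, hfst, hsnd]
    rfl
  funext x
  rw [polarizedChernWeil_apply, Pi.smul_apply, antisymmetrize_apply]
  simp only [pairForm_apply, hpairs]
  rfl

variable [LieRingModule g V] [LieModule ℝ g V]

theorem polarizedChernWeil_curvature_sub_mem_range
    {f : MultilinearMap ℝ (fun _ : Fin (r + 1) => π.ker) V}
    (hsym : ∀ (y : Fin (r + 1) → π.ker) (τ : Perm (Fin (r + 1))), f (fun i => y (τ i)) = f y)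
    (hinv : ∀ (x : gh) (y : Fin (r + 1) → π.ker), ⁅π x, f y⁆ = ∑ i, f (update y i ⁅x, y i⁆))
    {σ₀ σ₁ : g →ₗ[ℝ] gh} (h₀ : ∀ x, π (σ₀ x) = x) (h₁ : ∀ x, π (σ₁ x) = x) :
    (polarizedChernWeil f fun _ => curvature π σ₀ h₀) -
        (polarizedChernWeil f fun _ => curvature π σ₁ h₁) ∈
      LinearMap.range (ceDiffLinear ℝ (g := g) (V := V) (2 * r + 1)) := by
  have : IsAddTorsionFree V := .of_isTorsionFree ℝ V
  obtain ⟨D, rfl⟩ := exists_eq_shift h₀ h₁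
  set L := Fintype.linearCombination ℝ
    ![curvature π σ₀ h₀, covDeriv (connection π σ₀) D, bracketSquare D] with hL
  have hcurvature (t : ℝ) :
      L ![1, t, t ^ 2] = curvature π (shift σ₀ (t • D)) (map_shift_apply h₀ _) := by
    simp [hL, Fintype.linearCombination_apply, Fin.sum_univ_three, curvature_shift_smul h₀]
  have hcovDeriv (t : ℝ) :
      L ![0, 1, 2 * t] = covDeriv (connection π (shift σ₀ (t • D))) D := by
    simp [hL, Fintype.linearCombination_apply, Fin.sum_univ_three, covDeriv_connection_shift_smul]
  have hderiv (t : ℝ) : HasDerivAt (fun t : ℝ => ![1, t, t ^ 2]) ![0, 1, 2 * t] t := by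
    rw [hasDerivAt_pi]
    intro i
    fin_cases i
    · exact hasDerivAt_const t 1
    · exact hasDerivAt_id t
    · simpa using hasDerivAt_pow 2 t
  have hmem (t : ℝ) : (polarizedChernWeil f).linearDeriv (fun _ => L ![1, t, t ^ 2])
      (fun _ => L ![0, 1, 2 * t]) ∈
        LinearMap.range (ceDiffLinear ℝ (g := g) (V := V) (2 * r + 1)) := by
    rw [hcurvature, hcovDeriv]
    refine linearDeriv_polarizedChernWeil_mem_range hsym (fun a z => ?_)
      (curvature_skew _ _) (curvature_bianchi _ _) D
    simpa only [map_shift_apply h₀, connection_apply] using hinv (shift σ₀ (t • D) a) z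
  simpa only [hcurvature, zero_smul, one_smul, shift_zero] using
    sub_mem_of_linearDeriv_mem (polarizedChernWeil f) _ L hderiv hmem 0 1

end ChernWeil

theorem chernWeil_class_independent_of_section_general {g gh V : Type*}
    [LieRing g] [LieAlgebra ℝ g] [LieRing gh] [LieAlgebra ℝ gh] [AddCommGroup V] [Module ℝ V]
    [LieRingModule g V] [LieModule ℝ g V]
    (π : gh →ₗ⁅ℝ⁆ g) (p : ℕ) {m : ℕ} (hm : m + 1 = 2 * p)
    (σ₀ σ₁ : g →ₗ[ℝ] gh) (h₀ : ∀ x, π (σ₀ x) = x) (h₁ : ∀ x, π (σ₁ x) = x)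
    (f : MultilinearMap ℝ (fun _ : Fin p => π.ker) V)
    (hsym : ∀ (y : Fin p → π.ker) (τ : Perm (Fin p)), f (fun i => y (τ i)) = f y)
    (hinv : ∀ (x : gh) (y : Fin p → π.ker),
      ⁅π x, f y⁆ = ∑ i : Fin p, f (update y i ⁅x, y i⁆)) :
    ∃ η : AlternatingMap ℝ g V (Fin m),
      chernWeil π p (m + 1) hm σ₀ h₀ f - chernWeil π p (m + 1) hm σ₁ h₁ f = ceDiff m ⇑η := by
  obtain ⟨r, rfl, rfl⟩ : ∃ r, p = r + 1 ∧ m = 2 * r + 1 := ⟨p - 1, by lia, by lia⟩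
  obtain ⟨η, hη⟩ := Submodule.smul_mem _ ((2 : ℝ) ^ (r + 1))⁻¹
    (polarizedChernWeil_curvature_sub_mem_range hsym hinv h₀ h₁)
  rw [smul_sub, ← chernWeil_eq_smul_polarizedChernWeil,
    ← chernWeil_eq_smul_polarizedChernWeil] at hη
  exact ⟨η, hη.symm⟩

/-- **Lecomte's generalized Chern–Weil map is well defined**: for two linear sections
`σ₀, σ₁` of `π` the Chern–Weil cocycles `f_{σ₀}` and `f_{σ₁}` differ by the
Chevalley–Eilenberg coboundary of some alternating `(2p−1)`-linear map `η`. -/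
theorem chernWeil_class_independent_of_section {g gh V : Type*}
    [LieRing g] [LieAlgebra ℝ g] [FiniteDimensional ℝ g]
    [LieRing gh] [LieAlgebra ℝ gh] [FiniteDimensional ℝ gh]
    [AddCommGroup V] [Module ℝ V] [FiniteDimensional ℝ V]
    [LieRingModule g V] [LieModule ℝ g V]
    (π : gh →ₗ⁅ℝ⁆ g) (hπ : Function.Surjective π)
    (p : ℕ) (hp : 1 ≤ p)
    (σ₀ σ₁ : g →ₗ[ℝ] gh) (h₀ : ∀ x, π (σ₀ x) = x) (h₁ : ∀ x, π (σ₁ x) = x)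
    (f : MultilinearMap ℝ (fun _ : Fin p => π.ker) V)
    (hsym : ∀ (y : Fin p → π.ker) (τ : Equiv.Perm (Fin p)), f (fun i => y (τ i)) = f y)
    (hinv : ∀ (x : gh) (y : Fin p → π.ker),
      ⁅π x, f y⁆ = ∑ i : Fin p, f (Function.update y i ⁅x, y i⁆)) :
    ∃ η : AlternatingMap ℝ g V (Fin (2 * p - 1)),
      chernWeil π p (2 * p - 1 + 1) (by omega) σ₀ h₀ f
        - chernWeil π p (2 * p - 1 + 1) (by omega) σ₁ h₁ f
        = ceDiff (2 * p - 1) ⇑η := by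
  exact chernWeil_class_independent_of_section_general π p _ σ₀ σ₁ h₀ h₁ f hsym hinv
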